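/- arXiv:1602.03805 — 2 statements merged into one kernel-verified Lean document; each statement's English description precedes it below -/
import Mathlib

section
/- Let S be a nonempty finite set, let f, p : S → ℝ, and let H be any set of real-valued functions on S with p ∈ H. Suppose h ∈ H minimizes the empirical squared loss h ↦ Σ_{s ∈ S} (f(s) − h(s))² over H. Then Σ_{s ∈ S} (h(s) − p(s))² ≤ 4·Σ_{s ∈ S} (f(s) − p(s))². In particular, if |f(s) − p(s)| ≤ δ for all s ∈ S and |S| = k, then Σ_{s ∈ S} (h(s) − p(s))² ≤ 4·k·δ². -/
open Finset

section PseudoMetricSpace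

variable {ι X : Type*} [PseudoMetricSpace X]

lemma dist_sq_le_two_mul_add (x y z : X) :
    dist x y ^ 2 ≤ 2 * (dist z x ^ 2 + dist z y ^ 2) :=
  calc dist x y ^ 2
    _ ≤ (dist z x + dist z y) ^ 2 := by gcongr; exact dist_triangle_left x y z
    _ ≤ 2 * (dist z x ^ 2 + dist z y ^ 2) := add_sq_le

lemma sum_dist_sq_le_two_mul_add (t : Finset ι) (f g h : ι → X) :
    ∑ i ∈ t, dist (g i) (h i) ^ 2 ≤
      2 * (∑ i ∈ t, dist (f i) (g i) ^ 2 + ∑ i ∈ t, dist (f i) (h i) ^ 2) := by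
  rw [← sum_add_distrib, mul_sum]
  exact sum_le_sum fun i _ => dist_sq_le_two_mul_add (g i) (h i) (f i)

lemma sum_dist_sq_le_card_mul_sq {t : Finset ι} {f g : ι → X} {δ : ℝ}
    (hδ : ∀ i ∈ t, dist (f i) (g i) ≤ δ) :
    ∑ i ∈ t, dist (f i) (g i) ^ 2 ≤ #t * δ ^ 2 := by
  rw [← nsmul_eq_mul]
  exact sum_le_card_nsmul t _ _ fun i hi => pow_le_pow_left₀ dist_nonneg (hδ i hi) 2

theorem least_squares_fit_close_to_reference_general (t : Finset ι) (f p h : ι → X)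
    (hfit : ∑ i ∈ t, dist (f i) (h i) ^ 2 ≤ ∑ i ∈ t, dist (f i) (p i) ^ 2) :
    (∑ i ∈ t, dist (h i) (p i) ^ 2 ≤ 4 * ∑ i ∈ t, dist (f i) (p i) ^ 2) ∧
      ∀ δ : ℝ, (∀ i ∈ t, dist (f i) (p i) ≤ δ) →
        ∑ i ∈ t, dist (h i) (p i) ^ 2 ≤ 4 * #t * δ ^ 2 := by
  have hclose : ∑ i ∈ t, dist (h i) (p i) ^ 2 ≤ 4 * ∑ i ∈ t, dist (f i) (p i) ^ 2 := by
    linarith [sum_dist_sq_le_two_mul_add t f h p]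
  refine ⟨hclose, fun δ hδ => ?_⟩
  linarith [sum_dist_sq_le_card_mul_sq hδ]

end PseudoMetricSpace

/-- any least-squares minimizer `h` over a hypothesis class `H` containing a
reference function `p` satisfies `∑ (h−p)² ≤ 4 ∑ (f−p)²`; in particular, if
`|f−p| ≤ δ` pointwise on `S` with `|S| = k`, then `∑ (h−p)² ≤ 4kδ²`. -/
theorem least_squares_fit_close_to_reference
    (S : Type*) [Fintype S] [Nonempty S]
    (f p : S → ℝ) (H : Set (S → ℝ)) (hp : p ∈ H)
    (h : S → ℝ) (hh : h ∈ H)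
    (hmin : ∀ g ∈ H, ∑ s, (f s - h s) ^ 2 ≤ ∑ s, (f s - g s) ^ 2) :
    (∑ s, (h s - p s) ^ 2 ≤ 4 * ∑ s, (f s - p s) ^ 2) ∧
      ∀ δ : ℝ, (∀ s, |f s - p s| ≤ δ) →
        ∑ s, (h s - p s) ^ 2 ≤ 4 * (Fintype.card S : ℝ) * δ ^ 2 := by
  simpa only [Real.dist_eq, sq_abs, mem_univ, true_imp_iff, card_univ] using
    least_squares_fit_close_to_reference_general univ f p h
      (by simpa only [Real.dist_eq, sq_abs] using hmin p hp)
end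

section
/- Let m ≥ 2, let x₁, …, x_l be pairwise distinct points in ℝ^m, and let y₁, …, y_l ∈ ℝ be arbitrary labels. Then for every δ > 0 there exists an infinitely differentiable, compactly supported function f : ℝ^m → ℝ such that f(x_i) = y_i for all i = 1, …, l and ∫_{ℝ^m} ‖∇f(x)‖² dx < δ. Consequently, for any λ > 0, the infimum over smooth compactly supported f of the regularized risk Σ_{i=1}^l (y_i − f(x_i))² + λ·∫_{ℝ^m} ‖∇f‖² dx equals 0, and it is approached by functions that interpolate the labels exactly while being arbitrarily close to zero in first-order energy. -/
open MeasureTheory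

/-!
Points have zero `p`-capacity in dimension `d ≥ p` when `p > 1`. To see this, take a bump `φ` that
is locally constant where `z ↦ φ (2 z)` is not. The dilates `φ (2 ^ k z)` then have gradients with
disjoint supports, and as `p ≤ d` the energy of each is at most that of `φ`. The sum of `n` dilates
has value `n` at the origin and energy `O(n)`, so dividing it by `n` gives a spike of height `1` and
energy `O(n ^ (1 - p))`. Labels are interpolated by superposing translates of one narrow spike.
-/

open Filter Function Metric Module
open scoped ContDiff Topology

section DirichletEnergy

variable {E F ι : Type*} [NormedAddCommGroup E] [NormedSpace ℝ E] [MeasurableSpace E]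
  [NormedAddCommGroup F] [NormedSpace ℝ F] {μ : Measure E} {p : ℝ} {f g : E → F}

/-- The Dirichlet `p`-energy `∫ ‖Df‖ ^ p ∂μ`, with the operator norm of the Fréchet derivative.
For real-valued functions on a Euclidean space that is the norm of the gradient. -/
noncomputable def dirichletEnergy (p : ℝ) (μ : Measure E) (f : E → F) : ℝ :=
  ∫ z, ‖fderiv ℝ f z‖ ^ p ∂μ

lemma dirichletEnergy_nonneg : 0 ≤ dirichletEnergy p μ f :=
  integral_nonneg fun _ => by positivity

lemma dirichletEnergy_smul_const {g : E → ℝ} (hg : Differentiable ℝ g) (v : F) :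
    dirichletEnergy p μ (fun z => g z • v) = ‖v‖ ^ p * dirichletEnergy p μ g := by
  simp_rw [dirichletEnergy, ← integral_const_mul, fderiv_smul_const (hg _),
    ContinuousLinearMap.norm_smulRight_apply,
    Real.mul_rpow (norm_nonneg _) (norm_nonneg _), mul_comm]

lemma dirichletEnergy_comp_sub_right [BorelSpace E] [μ.IsAddRightInvariant] (f : E → F) (a : E) :
    dirichletEnergy p μ (fun z => f (z - a)) = dirichletEnergy p μ f := by
  simp_rw [dirichletEnergy, fderiv_comp_sub]
  exact integral_sub_right_eq_self (fun z => ‖fderiv ℝ f z‖ ^ p) a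

lemma dirichletEnergy_comp_smul [BorelSpace E] [FiniteDimensional ℝ E] [μ.IsAddHaarMeasure]
    (f : E → F) (c : ℝ) :
    dirichletEnergy p μ (fun z => f (c • z)) =
      |c| ^ p * |(c ^ finrank ℝ E)⁻¹| * dirichletEnergy p μ f := by
  simp_rw [dirichletEnergy, fderiv_comp_smul, norm_smul, Real.norm_eq_abs,
    Real.mul_rpow (abs_nonneg c) (norm_nonneg _), integral_const_mul]
  rw [Measure.integral_comp_smul μ (fun z => ‖fderiv ℝ f z‖ ^ p), smul_eq_mul, mul_assoc]

lemma dirichletEnergy_comp_smul_le [BorelSpace E] [FiniteDimensional ℝ E] [μ.IsAddHaarMeasure]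
    (hp : p ≤ finrank ℝ E) (f : E → F) {c : ℝ} (hc : 1 ≤ |c|) :
    dirichletEnergy p μ (fun z => f (c • z)) ≤ dirichletEnergy p μ f := by
  rw [dirichletEnergy_comp_smul]
  refine mul_le_of_le_one_left dirichletEnergy_nonneg ?_
  have hc₀ : 0 < |c| := zero_lt_one.trans_le hc
  rw [abs_inv, abs_pow, ← div_eq_mul_inv, div_le_one (pow_pos hc₀ _), ← Real.rpow_natCast]
  exact Real.rpow_le_rpow_of_exponent_le hc hp

variable [BorelSpace E] [IsFiniteMeasureOnCompacts μ]

lemma integrable_norm_fderiv_rpow (hf : ContDiff ℝ 1 f) (hc : HasCompactSupport f) (hp : 0 < p) :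
    Integrable (fun z => ‖fderiv ℝ f z‖ ^ p) μ := by
  refine Continuous.integrable_of_hasCompactSupport ?_ ?_
  · exact (hf.continuous_fderiv one_ne_zero).norm.rpow_const fun _ => .inr hp.le
  · exact (hc.fderiv (𝕜 := ℝ)).comp_left (g := fun A => ‖A‖ ^ p) (by simp [hp.ne'])

lemma dirichletEnergy_add_of_fderiv_eq_zero_or (hf : ContDiff ℝ 1 f) (hfc : HasCompactSupport f)
    (hg : ContDiff ℝ 1 g) (hgc : HasCompactSupport g) (hp : 0 < p)
    (h : ∀ z, fderiv ℝ f z = 0 ∨ fderiv ℝ g z = 0) :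
    dirichletEnergy p μ (fun z => f z + g z) = dirichletEnergy p μ f + dirichletEnergy p μ g := by
  rw [dirichletEnergy, dirichletEnergy, dirichletEnergy,
    ← integral_add (integrable_norm_fderiv_rpow hf hfc hp) (integrable_norm_fderiv_rpow hg hgc hp)]
  congr with z
  rw [fderiv_fun_add (hf.differentiable one_ne_zero z) (hg.differentiable one_ne_zero z)]
  rcases h z with h | h <;> simp [h, hp.ne']

lemma dirichletEnergy_sum_le {s : Finset ι} {f : ι → E → F} (hf : ∀ i ∈ s, ContDiff ℝ 1 (f i))
    (hc : ∀ i ∈ s, HasCompactSupport (f i)) (hp : 1 ≤ p) :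
    dirichletEnergy p μ (fun z => ∑ i ∈ s, f i z) ≤
      (s.card : ℝ) ^ (p - 1) * ∑ i ∈ s, dirichletEnergy p μ (f i) := by
  have hint : ∀ i ∈ s, Integrable (fun z => ‖fderiv ℝ (f i) z‖ ^ p) μ := fun i hi =>
    integrable_norm_fderiv_rpow (hf i hi) (hc i hi) (zero_lt_one.trans_le hp)
  have hpointwise (z : E) : ‖fderiv ℝ (fun z => ∑ i ∈ s, f i z) z‖ ^ p ≤
      (s.card : ℝ) ^ (p - 1) * ∑ i ∈ s, ‖fderiv ℝ (f i) z‖ ^ p := by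
    rw [fderiv_fun_sum fun i hi => (hf i hi).differentiable one_ne_zero z]
    calc ‖∑ i ∈ s, fderiv ℝ (f i) z‖ ^ p ≤ (∑ i ∈ s, ‖fderiv ℝ (f i) z‖) ^ p := by
          gcongr
          exact norm_sum_le _ _
      _ ≤ _ := by simpa using Real.rpow_sum_le_const_mul_sum_rpow s (fun i => ‖fderiv ℝ (f i) z‖) hp
  simp_rw [dirichletEnergy, ← integral_finsetSum s hint, ← integral_const_mul]
  exact integral_mono_of_nonneg (.of_forall fun _ => by positivity)
    ((integrable_finsetSum s hint).const_mul _) (.of_forall hpointwise)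

end DirichletEnergy

section DyadicSum

variable {E F : Type*} [NormedAddCommGroup E] [NormedSpace ℝ E] [NormedAddCommGroup F]
  {φ : E → F} {R : ℝ}

/-- The superposition `∑ k < n, φ (2 ^ k z)` of dyadic dilates of a profile `φ`, used to build tall
spikes of low energy. -/
noncomputable def dyadicSum (φ : E → F) (n : ℕ) (z : E) : F :=
  ∑ k ∈ Finset.range n, φ ((2 : ℝ) ^ k • z)

lemma dyadicSum_succ (φ : E → F) (n : ℕ) :
    dyadicSum φ (n + 1) = fun z => φ z + dyadicSum φ n ((2 : ℝ) • z) := by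
  ext z
  simp [dyadicSum, Finset.sum_range_succ', pow_succ, mul_smul, add_comm]

lemma dyadicSum_apply_zero (φ : E → F) (n : ℕ) : dyadicSum φ n 0 = n • φ 0 := by
  simp [dyadicSum]

lemma tsupport_dyadicSum_subset (hφ : support φ ⊆ closedBall 0 R) (n : ℕ) :
    tsupport (dyadicSum φ n) ⊆ closedBall 0 R := by
  refine closure_minimal (support_subset_iff'.2 fun z hz => ?_) isClosed_closedBall
  refine Finset.sum_eq_zero fun k _ => notMem_support.1 fun hk => hz ?_
  have hle : ‖z‖ ≤ 2 ^ k * ‖z‖ := le_mul_of_one_le_left (norm_nonneg z) (one_le_pow₀ one_le_two)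
  have hkR : 2 ^ k * ‖z‖ ≤ R := by simpa [norm_smul] using hφ hk
  simpa using hle.trans hkR

variable [NormedSpace ℝ F]

lemma contDiff_dyadicSum {k : WithTop ℕ∞} (hφ : ContDiff ℝ k φ) (n : ℕ) :
    ContDiff ℝ k (dyadicSum φ n) :=
  ContDiff.sum fun _ _ => hφ.comp (contDiff_const_smul _)

variable [FiniteDimensional ℝ E] [MeasurableSpace E] [BorelSpace E] {μ : Measure E}
  [μ.IsAddHaarMeasure] {p : ℝ}

lemma dirichletEnergy_dyadicSum_le (hφ : ContDiff ℝ 1 φ) (hsupp : support φ ⊆ closedBall 0 R)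
    (hconst : ∀ z, ‖z‖ ≤ R / 2 → fderiv ℝ φ z = 0) (hp₀ : 0 < p) (hp : p ≤ finrank ℝ E) (n : ℕ) :
    dirichletEnergy p μ (dyadicSum φ n) ≤ n * dirichletEnergy p μ φ := by
  induction n with
  | zero =>
    have h₀ : dyadicSum φ 0 = fun _ => 0 := by ext; simp [dyadicSum]
    simp [dirichletEnergy, h₀, hp₀.ne']
  | succ n ih =>
    have hφc : HasCompactSupport φ :=
      .of_support_subset_isCompact (isCompact_closedBall 0 R) hsupp
    have hSc : HasCompactSupport (dyadicSum φ n) :=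
      (isCompact_closedBall 0 R).of_isClosed_subset (isClosed_tsupport _)
        (tsupport_dyadicSum_subset hsupp n)
    have hdisj (z : E) :
        fderiv ℝ φ z = 0 ∨ fderiv ℝ (fun z => dyadicSum φ n ((2 : ℝ) • z)) z = 0 := by
      refine (le_or_gt ‖z‖ (R / 2)).imp (hconst z) fun hz => ?_
      have hz' : (2 : ℝ) • z ∉ tsupport (dyadicSum φ n) := fun hmem => by
        have : 2 * ‖z‖ ≤ R := by simpa [norm_smul] using tsupport_dyadicSum_subset hsupp n hmem
        linarith
      rw [fderiv_comp_smul, fderiv_of_notMem_tsupport ℝ hz', smul_zero]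
    have hdilate : ContDiff ℝ 1 fun z => dyadicSum φ n ((2 : ℝ) • z) :=
      (contDiff_dyadicSum hφ n).comp (contDiff_const_smul _)
    have hdilatec : HasCompactSupport fun z => dyadicSum φ n ((2 : ℝ) • z) :=
      hSc.comp_smul two_ne_zero
    calc dirichletEnergy p μ (dyadicSum φ (n + 1))
        = dirichletEnergy p μ φ + dirichletEnergy p μ (fun z => dyadicSum φ n ((2 : ℝ) • z)) := by
          rw [dyadicSum_succ,
            dirichletEnergy_add_of_fderiv_eq_zero_or hφ hφc hdilate hdilatec hp₀ hdisj]
      _ ≤ dirichletEnergy p μ φ + n * dirichletEnergy p μ φ := by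
          gcongr
          exact (dirichletEnergy_comp_smul_le hp _ (by simp)).trans ih
      _ = (n + 1 : ℕ) * dirichletEnergy p μ φ := by push_cast; ring

end DyadicSum

section TranslateSum

variable {E F ι : Type*} [NormedAddCommGroup E] [NormedAddCommGroup F] [NormedSpace ℝ F]
  [Fintype ι] {g : E → ℝ}

/-- The superposition `∑ i, g (z - x i) • y i` of copies of a profile `g` centred at the nodes `x i`
with amplitudes `y i`. It interpolates the labels `y` when `g` is a spike narrower than the
separation of the nodes. -/
noncomputable def translateSum (g : E → ℝ) (x : ι → E) (y : ι → F) (z : E) : F :=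
  ∑ i, g (z - x i) • y i

lemma translateSum_apply_of_lt_dist {x : ι → E} {r : ℝ} (hg₀ : g 0 = 1)
    (hg : support g ⊆ closedBall 0 r) (hx : Pairwise fun i j => r < dist (x i) (x j)) (y : ι → F)
    (j : ι) : translateSum g x y (x j) = y j := by
  have hvanish (i : ι) (hij : i ≠ j) : g (x j - x i) = 0 :=
    notMem_support.1 fun h => (hx hij.symm).not_ge (by simpa [dist_eq_norm] using hg h)
  rw [translateSum, Finset.sum_eq_single j (fun i _ hij => by rw [hvanish i hij, zero_smul])
    (by simp), sub_self, hg₀, one_smul]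

lemma hasCompactSupport_translate_smul (hg : HasCompactSupport g) (a : E) (v : F) :
    HasCompactSupport fun z => g (z - a) • v :=
  HasCompactSupport.smul_right (f := fun z => g (z - a)) (f' := fun _ => v)
    (hg.comp_homeomorph (Homeomorph.subRight a))

lemma hasCompactSupport_translateSum (hg : HasCompactSupport g) (x : ι → E) (y : ι → F) :
    HasCompactSupport (translateSum g x y) := by
  have h : translateSum g x y = ∑ i, fun z => g (z - x i) • y i := by
    ext z
    simp [translateSum]
  rw [h]
  exact .finset_sum fun i _ => hasCompactSupport_translate_smul hg (x i) (y i)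

variable [NormedSpace ℝ E]

lemma contDiff_translate_smul {k : WithTop ℕ∞} (hg : ContDiff ℝ k g) (a : E) (v : F) :
    ContDiff ℝ k fun z => g (z - a) • v :=
  (hg.comp (contDiff_id.sub contDiff_const)).smul contDiff_const

lemma contDiff_translateSum {k : WithTop ℕ∞} (hg : ContDiff ℝ k g) (x : ι → E) (y : ι → F) :
    ContDiff ℝ k (translateSum g x y) :=
  ContDiff.sum fun i _ => contDiff_translate_smul hg (x i) (y i)

variable [MeasurableSpace E] [BorelSpace E] {μ : Measure E} [IsFiniteMeasureOnCompacts μ]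
  [μ.IsAddRightInvariant] {p : ℝ}

lemma dirichletEnergy_translateSum_le (hg : ContDiff ℝ 1 g) (hgc : HasCompactSupport g)
    (x : ι → E) (y : ι → F) (hp : 1 ≤ p) :
    dirichletEnergy p μ (translateSum g x y) ≤
      (Fintype.card ι : ℝ) ^ (p - 1) * (∑ i, ‖y i‖ ^ p) * dirichletEnergy p μ g := by
  have hterm (i : ι) : dirichletEnergy p μ (fun z => g (z - x i) • y i) =
      ‖y i‖ ^ p * dirichletEnergy p μ g := by
    have hshift : Differentiable ℝ fun z => g (z - x i) :=
      (hg.differentiable one_ne_zero).comp (differentiable_id.sub_const (x i))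
    rw [dirichletEnergy_smul_const hshift, dirichletEnergy_comp_sub_right]
  calc dirichletEnergy p μ (translateSum g x y)
      ≤ (Fintype.card ι : ℝ) ^ (p - 1) *
          ∑ i, dirichletEnergy p μ (fun z => g (z - x i) • y i) :=
        dirichletEnergy_sum_le (fun i _ => contDiff_translate_smul hg (x i) (y i))
          (fun i _ => hasCompactSupport_translate_smul hgc (x i) (y i)) hp
    _ = (Fintype.card ι : ℝ) ^ (p - 1) * (∑ i, ‖y i‖ ^ p) * dirichletEnergy p μ g := by
        simp_rw [hterm, ← Finset.sum_mul, mul_assoc]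

end TranslateSum

section Interpolation

variable {E F ι : Type*} [NormedAddCommGroup E] [NormedSpace ℝ E] [FiniteDimensional ℝ E]
  [MeasurableSpace E] [BorelSpace E] [NormedAddCommGroup F] [NormedSpace ℝ F]
  (μ : Measure E) [μ.IsAddHaarMeasure] {p : ℝ}

lemma exists_spike_dirichletEnergy_lt (hp₁ : 1 < p) (hp : p ≤ finrank ℝ E) {r ε : ℝ} (hr : 0 < r)
    (hε : 0 < ε) :
    ∃ g : E → ℝ, ContDiff ℝ ∞ g ∧ g 0 = 1 ∧ support g ⊆ closedBall 0 r ∧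
      dirichletEnergy p μ g < ε := by
  let φ : ContDiffBump (0 : E) := ⟨2 * r / 3, r, by positivity, by linarith⟩
  have hφsupp : support φ ⊆ closedBall 0 r := φ.support_eq.trans_subset ball_subset_closedBall
  have hφconst (z : E) (hz : ‖z‖ ≤ r / 2) : fderiv ℝ φ z = 0 := by
    have hmem : z ∈ ball 0 φ.rIn := mem_ball_zero_iff.2 (hz.trans_lt (by simp only [φ]; linarith))
    rw [(φ.eventuallyEq_one_of_mem_ball hmem).fderiv_eq]
    exact fderiv_const_apply 1
  have hdecay : Tendsto (fun n : ℕ => (n : ℝ) ^ (-(p - 1)) * dirichletEnergy p μ φ) atTop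
      (𝓝 0) := by
    simpa using ((tendsto_rpow_neg_atTop (sub_pos.2 hp₁)).comp
      tendsto_natCast_atTop_atTop).mul_const (dirichletEnergy p μ φ)
  obtain ⟨n, hnε, hn⟩ := ((hdecay.eventually_lt_const hε).and (eventually_gt_atTop 0)).exists
  have hn' : (0 : ℝ) < n := Nat.cast_pos.2 hn
  have hS : ContDiff ℝ ∞ (dyadicSum φ n) := contDiff_dyadicSum φ.contDiff n
  have hφ₀ : φ 0 = 1 := φ.eventuallyEq_one.eq_of_nhds
  refine ⟨fun z => dyadicSum φ n z • (n : ℝ)⁻¹, hS.smul contDiff_const, ?_, ?_, ?_⟩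
  · simp [dyadicSum_apply_zero, hφ₀, hn'.ne']
  · exact (support_smul_subset_left _ _).trans
      ((subset_tsupport _).trans (tsupport_dyadicSum_subset hφsupp n))
  · calc dirichletEnergy p μ (fun z => dyadicSum φ n z • (n : ℝ)⁻¹)
        = ‖(n : ℝ)⁻¹‖ ^ p * dirichletEnergy p μ (dyadicSum φ n) :=
          dirichletEnergy_smul_const (hS.differentiable (by simp)) _
      _ ≤ ‖(n : ℝ)⁻¹‖ ^ p * (n * dirichletEnergy p μ φ) := by
          gcongr
          exact dirichletEnergy_dyadicSum_le φ.contDiff hφsupp hφconst (zero_lt_one.trans hp₁) hp n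
      _ = (n : ℝ) ^ (-(p - 1)) * dirichletEnergy p μ φ := by
          rw [norm_inv, Real.norm_natCast, Real.inv_rpow hn'.le, ← Real.rpow_neg hn'.le,
            ← mul_assoc, ← Real.rpow_add_one hn'.ne', neg_sub, sub_eq_neg_add]
      _ < ε := hnε

lemma exists_pos_pairwise_lt_dist {X : Type*} [MetricSpace X] [Finite ι] {x : ι → X}
    (hx : Injective x) : ∃ r > 0, Pairwise fun i j => r < dist (x i) (x j) := by
  have hev : ∀ᶠ r in 𝓝[>] (0 : ℝ), ∀ i j, i ≠ j → r < dist (x i) (x j) := by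
    simp_rw [eventually_all]
    exact fun i j hij => nhdsWithin_le_nhds (eventually_lt_nhds (dist_pos.2 (hx.ne hij)))
  obtain ⟨r, hr, hr₀⟩ := (hev.and self_mem_nhdsWithin).exists
  exact ⟨r, hr₀, fun i j => hr i j⟩

lemma exists_interpolant_dirichletEnergy_lt [Finite ι] {x : ι → E} (hx : Injective x) (y : ι → F)
    (hp₁ : 1 < p) (hp : p ≤ finrank ℝ E) {δ : ℝ} (hδ : 0 < δ) :
    ∃ f : E → F, ContDiff ℝ ∞ f ∧ HasCompactSupport f ∧ (∀ i, f (x i) = y i) ∧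
      dirichletEnergy p μ f < δ := by
  cases nonempty_fintype ι
  obtain ⟨r, hr, hsep⟩ := exists_pos_pairwise_lt_dist hx
  set C := (Fintype.card ι : ℝ) ^ (p - 1) * ∑ i, ‖y i‖ ^ p
  obtain ⟨η, hη, hηδ⟩ := exists_pos_mul_lt hδ C
  obtain ⟨g, hg, hg₀, hgsupp, hgη⟩ := exists_spike_dirichletEnergy_lt μ hp₁ hp hr hη
  have hgc : HasCompactSupport g :=
    .of_support_subset_isCompact (isCompact_closedBall 0 r) hgsupp
  refine ⟨translateSum g x y, contDiff_translateSum hg x y, hasCompactSupport_translateSum hgc x y,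
    translateSum_apply_of_lt_dist hg₀ hgsupp hsep y, ?_⟩
  calc dirichletEnergy p μ (translateSum g x y)
      ≤ C * dirichletEnergy p μ g :=
        dirichletEnergy_translateSum_le (hg.of_le (by simp)) hgc x y hp₁.le
    _ ≤ C * η := by gcongr
    _ < δ := hηδ

theorem first_order_regularized_risk_degenerate_general [Fintype ι] {x : ι → E} (hx : Injective x)
    (y : ι → F) (hp₁ : 1 < p) (hp : p ≤ finrank ℝ E) :
    (∀ δ : ℝ, 0 < δ → ∃ f : E → F, ContDiff ℝ ∞ f ∧ HasCompactSupport f ∧ (∀ i, f (x i) = y i) ∧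
        dirichletEnergy p μ f < δ) ∧
      ∀ lam : ℝ, 0 ≤ lam →
        sInf {R : ℝ | ∃ f : E → F, ContDiff ℝ ∞ f ∧ HasCompactSupport f ∧
          R = ∑ i, ‖y i - f (x i)‖ ^ 2 + lam * dirichletEnergy p μ f} = 0 := by
  have hinterp (δ : ℝ) (hδ : 0 < δ) := exists_interpolant_dirichletEnergy_lt μ hx y hp₁ hp hδ
  refine ⟨hinterp, fun lam hlam => ?_⟩
  have hnonneg (f : E → F) : 0 ≤ ∑ i, ‖y i - f (x i)‖ ^ 2 + lam * dirichletEnergy p μ f :=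
    add_nonneg (by positivity) (mul_nonneg hlam dirichletEnergy_nonneg)
  refine csInf_eq_of_forall_ge_of_forall_gt_exists_lt ?_ ?_ fun ε hε => ?_
  · exact ⟨_, 0, contDiff_const, .zero, rfl⟩
  · rintro R ⟨f, -, -, rfl⟩
    exact hnonneg f
  · obtain ⟨δ, hδ, hδε⟩ := exists_pos_mul_lt hε lam
    obtain ⟨f, hf, hfc, hfy, hfδ⟩ := hinterp δ hδ
    refine ⟨_, ⟨f, hf, hfc, rfl⟩, ?_⟩
    simpa [hfy] using (mul_le_mul_of_nonneg_left hfδ.le hlam).trans_lt hδε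

end Interpolation

/-- degeneracy of first-order regularization for `m ≥ 2`: any labels at
pairwise distinct points can be interpolated by smooth compactly supported functions of
arbitrarily small Dirichlet energy, so for every `λ > 0` the infimum of the regularized
risk over smooth compactly supported functions is `0`. -/
theorem first_order_regularized_risk_degenerate
    (m : ℕ) (hm : 2 ≤ m) (l : ℕ) (x : Fin l → EuclideanSpace ℝ (Fin m))
    (hx : Function.Injective x) (y : Fin l → ℝ) :
    (∀ δ : ℝ, 0 < δ → ∃ f : EuclideanSpace ℝ (Fin m) → ℝ,
        ContDiff ℝ (⊤ : ℕ∞) f ∧ HasCompactSupport f ∧ (∀ i, f (x i) = y i) ∧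
          ∫ z, ‖gradient f z‖ ^ 2 < δ) ∧
      ∀ lam : ℝ, 0 < lam →
        sInf {R : ℝ | ∃ f : EuclideanSpace ℝ (Fin m) → ℝ,
            ContDiff ℝ (⊤ : ℕ∞) f ∧ HasCompactSupport f ∧
              R = ∑ i, (y i - f (x i)) ^ 2 + lam * ∫ z, ‖gradient f z‖ ^ 2} = 0 := by
  have h := first_order_regularized_risk_degenerate_general volume hx y one_lt_two (by simpa)
  simp only [dirichletEnergy, Real.rpow_two, Real.norm_eq_abs, sq_abs] at h
  simp only [gradient, LinearIsometryEquiv.norm_map]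
  exact ⟨h.1, fun lam hlam => h.2 lam hlam.le⟩
end
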